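/- Let n ≥ 1, r > 0, and z ∈ ℝ^n. Let τ_z q_r denote the function x ↦ q_r(x+z), i.e., the characteristic function of the set {x ∈ ℝ^n : x + z ∈ Q_r}. Then for every y ∈ ℝ^n, |𝓕(τ_z q_r)(y)| ≥ (r/2)^n · q_{1/(2r)}(y); that is, for every y ∈ Q_{1/(2r)}, |𝓕(τ_z q_r)(y)| ≥ (r/2)^n. -/

import Mathlib

/-!
The character `e^{-2πi x·y}` and the indicator of the translated cube both split into products over
the coordinates, so by Fubini the transform is a product of `n` one-dimensional integrals over
intervals of length `r`, centred at `-z i`. Multiplying such an integral by the unimodular constant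
`e^{-2πi (z i)(y i)}` centres the phase: it becomes `-2π(t + z i)(y i)`, of absolute value at most
`2π · (r/2) · 1/(4r) = π/4` when `y ∈ Q_{1/(2r)}`. The real part of the integrand is then at least
`1/2`, so each factor has norm at least `r/2` (`half_le_norm_integral_interval`).
-/

open MeasureTheory Real FourierTransform ENNReal

/-- The open cube `Q_r = (-r/2, r/2)^n` in `ℝⁿ`. -/
def cube (n : ℕ) (r : ℝ) : Set (EuclideanSpace ℝ (Fin n)) :=
  {x | ∀ i, x i ∈ Set.Ioo (-(r / 2)) (r / 2)}

/-- The one-dimensional bound: a character of frequency `|y| ≤ 1/(4r)` integrated over an interval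
of length `r` does not cancel by more than a factor `2`. -/
lemma half_le_norm_integral_interval (r z y : ℝ) (hr : 0 < r) (hy : |y| ≤ 1 / (4 * r)) :
    r / 2 ≤ ‖∫ t : ℝ, (Set.Ioo (-(r / 2) - z) (r / 2 - z)).indicator
      (fun t => Complex.exp (↑(-2 * π * (t * y)) * Complex.I)) t‖ := by
  rw [integral_indicator measurableSet_Ioo]
  set S := Set.Ioo (-(r / 2) - z) (r / 2 - z) with hS
  have hvol : volume.real S = r := by
    rw [hS, Real.volume_real_Ioo_of_le (by linarith)]; ring
  have hfin : volume S ≠ ∞ := by rw [hS]; exact measure_Ioo_lt_top.ne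
  have hint : IntegrableOn
      (fun t : ℝ => Complex.exp (↑(-2 * π * ((t + z) * y)) * Complex.I)) S := by
    refine (Continuous.integrableOn_Icc (a := -(r / 2) - z) (b := r / 2 - z) ?_).mono_set
      Set.Ioo_subset_Icc_self
    fun_prop
  have hcos : ∀ t ∈ S, (1 / 2 : ℝ) ≤ cos (-2 * π * ((t + z) * y)) := by
    intro t ht
    rw [← cos_abs, ← cos_pi_div_three]
    have h1 : |t + z| ≤ r / 2 := abs_le.2 ⟨by linarith [ht.1], by linarith [ht.2]⟩
    have h2 : |t + z| * |y| ≤ r / 2 * (1 / (4 * r)) := by gcongr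
    have h3 : r / 2 * (1 / (4 * r)) = 1 / 8 := by field_simp; norm_num
    have h4 : |-2 * π * ((t + z) * y)| = 2 * π * (|t + z| * |y|) := by
      rw [abs_mul, abs_mul, abs_mul, abs_of_pos pi_pos]; norm_num
    apply cos_le_cos_of_nonneg_of_le_pi (abs_nonneg _) (by linarith [pi_pos])
    rw [h4]
    nlinarith [pi_pos]
  have hphase : ‖∫ t in S, Complex.exp (↑(-2 * π * (t * y)) * Complex.I)‖
      = ‖∫ t in S, Complex.exp (↑(-2 * π * ((t + z) * y)) * Complex.I)‖ := by
    have h : ∀ t : ℝ, Complex.exp (↑(-2 * π * ((t + z) * y)) * Complex.I)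
        = Complex.exp (↑(-2 * π * (z * y)) * Complex.I)
          * Complex.exp (↑(-2 * π * (t * y)) * Complex.I) := by
      intro t
      rw [← Complex.exp_add]
      congr 1
      push_cast
      ring
    simp_rw [h]
    rw [integral_const_mul, norm_mul, Complex.norm_exp_ofReal_mul_I, one_mul]
  rw [hphase]
  refine le_trans ?_ (Complex.re_le_norm _)
  have hre := integral_re (𝕜 := ℂ) hint
  simp only [RCLike.re_to_complex, Complex.exp_ofReal_mul_I_re] at hre
  have hcint : IntegrableOn (fun t : ℝ => cos (-2 * π * ((t + z) * y))) S := by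
    simpa only [IntegrableOn, RCLike.re_to_complex, Complex.exp_ofReal_mul_I_re] using hint.re
  rw [← hre]
  calc r / 2 = ∫ _ in S, (1 / 2 : ℝ) := by
        rw [setIntegral_const, hvol, smul_eq_mul]; ring
    _ ≤ _ := setIntegral_mono_on (integrableOn_const hfin) hcint measurableSet_Ioo hcos

/-- Fubini for the transform of the translated cube. -/
lemma fourier_translated_cube_eq_prod (n : ℕ) (r : ℝ) (z y : EuclideanSpace ℝ (Fin n)) :
    𝓕 (fun x => ({x : EuclideanSpace ℝ (Fin n) | x + z ∈ cube n r}.indicator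
      (fun _ => (1 : ℂ)) x)) y
    = ∏ i, ∫ t : ℝ, (Set.Ioo (-(r / 2) - z i) (r / 2 - z i)).indicator
      (fun t => Complex.exp (↑(-2 * π * (t * y i)) * Complex.I)) t := by
  classical
  rw [← integral_fintype_prod_volume_eq_prod (fun i => (Set.Ioo (-(r / 2) - z i)
    (r / 2 - z i)).indicator (fun t : ℝ => Complex.exp (↑(-2 * π * (t * y i)) * Complex.I)))]
  rw [Real.fourier_eq', ← (PiLp.volume_preserving_toLp (Fin n)).integral_comp
    (MeasurableEquiv.toLp 2 (Fin n → ℝ)).measurableEmbedding]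
  congr 1
  ext x
  have hmem : WithLp.toLp 2 x + z ∈ cube n r ↔
      ∀ i, x i ∈ Set.Ioo (-(r / 2) - z i) (r / 2 - z i) := by
    simp only [cube, Set.mem_ofPred_eq, PiLp.add_apply, Set.mem_Ioo, sub_lt_iff_lt_add,
      lt_sub_iff_add_lt]
  by_cases h : ∀ i, x i ∈ Set.Ioo (-(r / 2) - z i) (r / 2 - z i)
  · rw [Set.indicator_of_mem (by exact hmem.2 h),
      Finset.prod_congr rfl (fun i _ => Set.indicator_of_mem (h i) _), ← Complex.exp_sum,
      smul_eq_mul, mul_one, ← Finset.sum_mul, ← Complex.ofReal_sum, ← Finset.mul_sum,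
      PiLp.inner_apply]
    simp [mul_comm]
  · rw [Set.indicator_of_notMem (by exact fun h' => h (hmem.1 h')), smul_zero]
    push Not at h
    obtain ⟨i, hi⟩ := h
    exact (Finset.prod_eq_zero (Finset.mem_univ i) (Set.indicator_of_notMem hi _)).symm

/-- **Lemma (lower bound for the Fourier transform of a translated cube).**
For `r > 0`, `z ∈ ℝⁿ`, and the translated characteristic function `τ_z q_r : x ↦ q_r(x+z)`,
one has `|𝓕(τ_z q_r)(y)| ≥ (r/2)^n · q_{1/(2r)}(y)` for all `y`, i.e.
`|𝓕(τ_z q_r)(y)| ≥ (r/2)^n` for every `y ∈ Q_{1/(2r)}`. -/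
theorem fourier_translated_cube_lower_bound
    (n : ℕ) (hn : 1 ≤ n) (r : ℝ) (hr : 0 < r) (z : EuclideanSpace ℝ (Fin n)) :
    ∀ y : EuclideanSpace ℝ (Fin n),
      (r / 2) ^ n * (cube n (1 / (2 * r))).indicator (fun _ => (1 : ℝ)) y ≤
        ‖𝓕 (fun x => ({x : EuclideanSpace ℝ (Fin n) | x + z ∈ cube n r}.indicator
          (fun _ => (1 : ℂ)) x)) y‖ := by
  intro y
  by_cases hy : y ∈ cube n (1 / (2 * r))
  · rw [Set.indicator_of_mem hy, mul_one, fourier_translated_cube_eq_prod, norm_prod]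
    have hc : (r / 2) ^ n = ∏ _i : Fin n, (r / 2) := by
      rw [Finset.prod_const, Finset.card_univ, Fintype.card_fin]
    rw [hc]
    refine Finset.prod_le_prod (fun _ _ => by positivity) (fun i _ => ?_)
    apply half_le_norm_integral_interval r (z i) (y i) hr
    have h := hy i
    have h2 : 1 / (2 * r) / 2 = 1 / (4 * r) := by field_simp; norm_num
    rw [h2] at h
    exact abs_le.2 ⟨h.1.le, h.2.le⟩
  · rw [Set.indicator_of_notMem hy, mul_zero]
    exact norm_nonneg _
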